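/- Let N>1 be an integer and let q be a prime number. If ω(N) ≥ q⁶/2 + 3q⁴ − (3/2)q³ + (9/2)q² − (11/2)q + 3 and p₁(N) ≥ q⁶/2 + 3q⁴ − 2q³ + (9/2)q² − 7q + 3, then c(N) ≥ q − 2. In particular, the complexity function c(N) is unbounded. -/

import Mathlib

namespace Paper

noncomputable section

/-- Closed disk attached to a rational `α = a/b` in lowest terms:
center `α`, radius `1/b`. -/
def disk (α : ℚ) : Set ℂ := Metric.closedBall (α : ℂ) (1 / (α.den : ℝ))

/-- The closed disk `D_{a/b}` of radius `1/b` centered at `a/b`. -/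
def diskAt (a b : ℕ) : Set ℂ := Metric.closedBall ((a : ℂ) / (b : ℂ)) (1 / (b : ℝ))

/-- The north pole `P_α = a/b + i/b` of the disk of `α = a/b` in lowest terms. -/
def northPole (α : ℚ) : ℂ := (α : ℂ) + Complex.I / (α.den : ℂ)

/-- Complexity of the north pole of `α` relative to a set `S` of rationals:
the number of `β ∈ S`, `β ≠ α`, whose disk contains `P_α`. -/
def poleComplexity (S : Set ℚ) (α : ℚ) : ℕ :=
  {β ∈ S | β ≠ α ∧ northPole α ∈ disk β}.ncard

/-- Rationals `a/b ∈ [0,1]` in lowest terms with `N ∣ b`. -/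
def cand (N : ℕ) : Set ℚ := {α | 0 ≤ α ∧ α ≤ 1 ∧ N ∣ α.den}

/-- The region `R_N`. -/
def RN (N : ℕ) : Set ℂ := ⋃ α ∈ cand N, disk α

/-- The set `S_N`: those `α` whose disk is not covered by the other disks. -/
def SSet (N : ℕ) : Set ℚ :=
  {α | α ∈ cand N ∧ ¬ disk α ⊆ ⋃ β ∈ cand N \ {α}, disk β}

/-- The complexity `c(N)`: the maximum of the complexities of north poles of `α ∈ S_N`. -/
def cN (N : ℕ) : ℕ := sSup (poleComplexity (SSet N) '' SSet N)

theorem mem_disk_iff (z : ℂ) (β : ℚ) :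
    z ∈ disk β ↔ (z.re - β) ^ 2 + z.im ^ 2 ≤ (1 / (β.den : ℝ)) ^ 2 := by
  have h0 : (0 : ℝ) ≤ 1 / (β.den : ℝ) := by positivity
  rw [disk, Metric.mem_closedBall, Complex.dist_eq, ← abs_of_nonneg h0, ← abs_norm, ← sq_le_sq,
    Complex.sq_norm, Complex.normSq_apply, abs_of_nonneg h0]
  simp [sq]

theorem disk_subset_disk {α β : ℚ}
    (h : 1 / (α.den : ℝ) + |(α : ℝ) - β| ≤ 1 / (β.den : ℝ)) : disk α ⊆ disk β := by
  apply Metric.closedBall_subset_closedBall'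
  rwa [Complex.dist_eq, ← Complex.ofReal_ratCast, ← Complex.ofReal_ratCast, ← Complex.ofReal_sub,
    Complex.norm_real, Real.norm_eq_abs]

/-- Writing a candidate as `a / (N n)` in lowest terms. -/
theorem exists_eq_of_mem_cand {N : ℕ} {α : ℚ} (h : α ∈ cand N) :
    ∃ (a : ℤ) (n : ℕ), 0 < n ∧ α.den = N * n ∧ α = (a : ℚ) / (N * n) ∧ 0 ≤ a ∧ a ≤ N * n ∧
      IsCoprime a (N : ℤ) ∧ IsCoprime a (n : ℤ) := by
  obtain ⟨h0, h1, n, hn⟩ := h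
  have hd : 0 < N * n := hn ▸ α.den_pos
  have hn0 : 0 < n := Nat.pos_of_mul_pos_left hd
  have hα : α = (α.num : ℚ) / (N * n) := by
    conv_lhs => rw [← Rat.num_div_den α, hn]
    push_cast; rfl
  have hcop : IsCoprime α.num ((N : ℤ) * n) := by
    have := α.reduced
    rw [hn] at this
    rw [Int.isCoprime_iff_nat_coprime]
    simpa [Int.natAbs_mul] using this
  refine ⟨α.num, n, hn0, hn, hα, Rat.num_nonneg.mpr h0, ?_, hcop.of_mul_right_left,
    hcop.of_mul_right_right⟩
  have hq : (0 : ℚ) < N * n := by exact_mod_cast hd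
  rw [hα, div_le_one hq] at h1
  exact_mod_cast h1

theorem den_intCast_div {N n : ℕ} {a : ℤ} (hn : 0 < N * n) (h₁ : IsCoprime a (N : ℤ))
    (h₂ : IsCoprime a (n : ℤ)) : ((a : ℚ) / (N * n)).den = N * n := by
  have h := Rat.den_div_eq_of_coprime (a := a) (b := ((N * n : ℕ) : ℤ)) (by exact_mod_cast hn)
    (by
      rw [← Int.isCoprime_iff_nat_coprime]
      push_cast
      exact h₁.mul_right h₂)
  push_cast at h
  exact_mod_cast h

/-- A disk contained in a strictly larger disk of the family is redundant. -/
theorem notMem_SSet_of_le {N n m : ℕ} {a c : ℤ} {α : ℚ} (hN : 1 < N) (hm : 0 < m) (hmn : m < n)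
    (hden : α.den = N * n) (hα : α = (a : ℚ) / (N * n)) (ha0 : 0 ≤ a) (ha1 : a ≤ N * n)
    (hc : IsCoprime c (N : ℤ)) (h : |c * n - a * m| ≤ (n : ℤ) - m) : α ∉ SSet N := by
  have hn : 0 < n := hm.trans hmn
  obtain ⟨hl, hu⟩ := abs_le.mp h
  have hnZ : (0 : ℤ) < n := by exact_mod_cast hn
  have hmZ : (0 : ℤ) < m := by exact_mod_cast hm
  have hNZ : (0 : ℤ) < N := by exact_mod_cast (by omega : 0 < N)
  have hc0 : 0 ≤ c := by
    by_contra! hneg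
    have : 0 ≤ a * m := by positivity
    nlinarith
  have hc1 : c ≤ N * m := by
    by_contra! hbig
    have : a * m ≤ N * n * m := by gcongr
    nlinarith
  set β : ℚ := (c : ℚ) / (N * m) with hβ
  have hNm : 0 < N * m := by positivity
  have hNmQ : (0 : ℚ) < N * m := by exact_mod_cast hNm
  have hdvd : β.den ∣ N * m := by
    have e : β = Rat.divInt c ((N * m : ℕ) : ℤ) := by
      rw [Rat.divInt_eq_div, hβ]
      push_cast
      rfl
    rw [e]
    exact Int.natCast_dvd_natCast.mp (Rat.den_dvd c _)
  have hle : β.den ≤ N * m := Nat.le_of_dvd hNm hdvd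
  have hβc : β ∈ cand N := by
    refine ⟨by positivity, ?_, ?_⟩
    · rw [hβ, div_le_one hNmQ]
      exact_mod_cast hc1
    · have e : (c : ℚ) * β.den = β.num * (N * m) := by
        have h1 : β * β.den = β.num := Rat.mul_den_eq_num β
        have h2 : β * (N * m) = c := by rw [hβ]; field_simp
        rw [← h1, ← h2]; ring
      have e' : c * β.den = β.num * (N * m) := by exact_mod_cast e
      have : (N : ℤ) ∣ c * β.den := ⟨β.num * m, by rw [e']; ring⟩
      exact_mod_cast hc.symm.dvd_of_dvd_mul_left this
  have hne : β ≠ α := by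
    intro e
    rw [e, hden] at hle
    have := Nat.le_of_mul_le_mul_left hle (by omega)
    omega
  rintro ⟨-, hS⟩
  apply hS
  refine subset_trans (disk_subset_disk ?_) (Set.subset_biUnion_of_mem (u := disk)
    (show β ∈ cand N \ {α} from ⟨hβc, hne⟩))
  have hNR : (0 : ℝ) < N := by exact_mod_cast hNZ
  have hnR : (0 : ℝ) < n := by exact_mod_cast hn
  have hmR : (0 : ℝ) < m := by exact_mod_cast hm
  have hβR : (β : ℝ) = c / (N * m) := by rw [hβ]; push_cast; rfl
  have hαR : (α : ℝ) = a / (N * n) := by rw [hα]; push_cast; rfl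
  have hR : |(c : ℝ) * n - a * m| ≤ (n : ℝ) - m := by exact_mod_cast h
  have hdenR : (1 : ℝ) / (N * m) ≤ 1 / β.den := by
    apply one_div_le_one_div_of_le
    · exact_mod_cast β.den_pos
    · exact_mod_cast hle
  refine le_trans ?_ hdenR
  have e : (α : ℝ) - β = (a * m - c * n) / (N * n * m) := by
    rw [hαR, hβR]; field_simp
  rw [e, hden, abs_div, abs_of_pos (show (0 : ℝ) < N * n * m by positivity), abs_sub_comm]
  have e2 : (1 : ℝ) / (N * m) = 1 / ((N * n : ℕ) : ℝ) + ((n : ℝ) - m) / (N * n * m) := by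
    push_cast; field_simp; ring
  rw [e2]
  gcongr

/-- A progression with coprime first term and difference contains an element coprime to `N`. -/
theorem exists_isCoprime_add_mul {c u : ℤ} (N : ℕ) (hN : N ≠ 0) (h : IsCoprime c u) :
    ∃ t : ℤ, IsCoprime (c + u * t) (N : ℤ) := by
  classical
  let s : Finset ℕ := N.primeFactors.filter (fun p : ℕ => ¬ (p : ℤ) ∣ c)
  refine ⟨((∏ p ∈ s, p : ℕ) : ℤ), ?_⟩
  rw [Int.isCoprime_iff_nat_coprime, Int.natAbs_natCast]
  refine Nat.Coprime.symm (Nat.coprime_of_dvd ?_)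
  intro p hp hpN hpd
  have hpd' : (p : ℤ) ∣ c + u * ((∏ p ∈ s, p : ℕ) : ℤ) := Int.natCast_dvd.mpr hpd
  have hpZ : Prime (p : ℤ) := Nat.prime_iff_prime_int.mp hp
  by_cases hpc : (p : ℤ) ∣ c
  · have h1 : (p : ℤ) ∣ u * ((∏ p ∈ s, p : ℕ) : ℤ) := (dvd_add_right hpc).mp hpd'
    rcases hpZ.dvd_or_dvd h1 with h2 | h2
    · exact hpZ.not_isUnit (h.isUnit_of_dvd' hpc h2)
    · have h3 : p ∣ ∏ p ∈ s, p := by exact_mod_cast h2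
      obtain ⟨r, hr, hpr⟩ := (Prime.dvd_finsetProd_iff hp.prime _).mp h3
      obtain ⟨hr1, hr2⟩ := Finset.mem_filter.mp hr
      have := (Nat.prime_dvd_prime_iff_eq hp (Nat.prime_of_mem_primeFactors hr1)).mp hpr
      exact hr2 (this ▸ hpc)
  · have hps : p ∈ s := Finset.mem_filter.mpr ⟨Nat.mem_primeFactors.mpr ⟨hp, hpN, hN⟩, hpc⟩
    have h1 : p ∣ ∏ p ∈ s, p := Finset.dvd_prod_of_mem (fun p => p) hps
    have h2 : (p : ℤ) ∣ ((∏ p ∈ s, p : ℕ) : ℤ) := by exact_mod_cast h1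
    exact hpc ((dvd_add_left (h2.mul_left u)).mp hpd')

/-- A bounded solution of `m u - c v = 1` with `c` coprime to `N`. -/
theorem exists_bounded_bezout {u v : ℤ} {N : ℕ} (hN : N ≠ 0) (hv : 1 < v) (h : IsCoprime u v) :
    ∃ m c : ℤ, 0 < m ∧ m < v * N ∧ m * u - c * v = 1 ∧ IsCoprime c (N : ℤ) := by
  obtain ⟨x, y, hxy⟩ := h
  have hcu : IsCoprime (-y) u := ⟨-v, x, by linear_combination hxy⟩
  obtain ⟨t, ht⟩ := exists_isCoprime_add_mul N hN hcu
  have hNZ : (0 : ℤ) < N := by exact_mod_cast Nat.pos_of_ne_zero hN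
  have hvN : 0 < v * N := by positivity
  have hdm := Int.emod_add_mul_ediv (x + v * t) (v * N)
  set r := (x + v * t) % (v * N) with hr
  set k := (x + v * t) / (v * N) with hk
  have hb : r * u - (-y + u * t - u * k * N) * v = 1 := by
    have : r = x + v * t - v * N * k := by linarith
    rw [this]; linear_combination hxy
  refine ⟨r, -y + u * t - u * k * N, lt_of_le_of_ne (Int.emod_nonneg _ hvN.ne') ?_,
    Int.emod_lt_of_pos _ hvN, hb, ?_⟩
  · intro h0
    rw [← h0] at hb
    have : v ∣ 1 := ⟨-(-y + u * t - u * k * N), by linarith⟩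
    have := Int.le_of_dvd one_pos this
    omega
  · have e : -y + u * t - u * k * N = -y + u * t + -(u * k) * N := by ring
    rw [e]
    exact ht.add_mul_right_left _

theorem den_le_of_mem_SSet {N : ℕ} (hN : 1 < N) {α : ℚ} (h : α ∈ SSet N) :
    α.den ≤ N * (4 * (N * N)) := by
  obtain ⟨a, n, hn, hden, hα, ha0, ha1, haN, han⟩ := exists_eq_of_mem_cand h.1
  rw [hden]
  apply Nat.mul_le_mul_left
  by_contra! hbig
  have hNZ : (1 : ℤ) < N := by exact_mod_cast hN
  have hnZ : (0 : ℤ) < n := by exact_mod_cast hn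
  have hbigZ : 4 * ((N : ℤ) * N) < n := by exact_mod_cast hbig
  have key : ∀ m c : ℤ, 0 < m → m < n → IsCoprime c (N : ℤ) → |c * n - a * m| ≤ n - m →
      False := by
    intro m c hm hmn hc hle
    lift m to ℕ using hm.le
    exact notMem_SSet_of_le hN (by exact_mod_cast hm) (by exact_mod_cast hmn) hden hα ha0 ha1 hc
      hle h
  obtain ⟨t, m, hm, hmN, hapx⟩ :=
    Real.exists_int_int_abs_mul_sub_le ((a : ℝ) / (N * n)) (show 0 < N by omega)
  have hs : |a * m - N * n * t| < n := by
    have hNR : (0 : ℝ) < N := by exact_mod_cast (by omega : 0 < N)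
    have hnR : (0 : ℝ) < n := by exact_mod_cast hn
    have e : (m : ℝ) * (a / (N * n)) - t = (a * m - N * n * t) / (N * n) := by field_simp
    rw [e, abs_div, abs_of_pos (show (0 : ℝ) < N * n by positivity), div_le_div_iff₀
      (by positivity) (by positivity)] at hapx
    have : |(a : ℝ) * m - N * n * t| < n := by
      have h0 := abs_nonneg ((a : ℝ) * m - N * n * t)
      nlinarith
    exact_mod_cast this
  have hmn : m < n := by nlinarith
  set s := a * m - N * n * t with hsdef
  obtain ⟨hs1, hs2⟩ := abs_lt.mp hs
  rcases le_or_gt m s with hcase | hcase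
  · refine key m (N * t + 1) hm hmn ⟨1, -t, by ring⟩ ?_
    have : (N * t + 1) * n - a * m = n - s := by rw [hsdef]; ring
    rw [this, abs_of_pos (by linarith)]
    linarith
  rcases le_or_gt s (-m) with hcase' | hcase'
  · refine key m (N * t - 1) hm hmn ⟨-1, t, by ring⟩ ?_
    have : (N * t - 1) * n - a * m = -(n + s) := by rw [hsdef]; ring
    rw [this, abs_neg, abs_of_pos (by linarith)]
    linarith
  obtain ⟨g, hg, u, v, huv, hu, hv⟩ : ∃ g : ℤ, 0 < g ∧ ∃ u v : ℤ, IsCoprime u v ∧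
      N * t = u * g ∧ m = v * g := by
    have hgpos : 0 < Int.gcd (N * t) m := Int.gcd_pos_of_ne_zero_right _ hm.ne'
    obtain ⟨u, v, huv, hu, hv⟩ := Int.exists_gcd_one hgpos
    exact ⟨_, by exact_mod_cast hgpos, u, v, Int.isCoprime_iff_gcd_eq_one.mpr huv, hu, hv⟩
  have hv0 : 0 < v := pos_of_mul_pos_left (hv ▸ hm) hg.le
  have hvm : v ≤ m := by nlinarith
  have hsg : s = (a * v - n * u) * g := by
    rw [hsdef, hv]; linear_combination (-(n : ℤ)) * hu
  set w := a * v - n * u with hw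
  have hw1 : w < v := by
    rw [hsg, hv] at hcase
    exact lt_of_mul_lt_mul_right hcase hg.le
  have hw2 : -v < w := by
    rw [hsg, hv, ← neg_mul] at hcase'
    exact lt_of_mul_lt_mul_right hcase' hg.le
  rcases (show 1 ≤ v from hv0).eq_or_lt with h1 | h1
  · have hw0 : w = 0 := by omega
    have : a = n * u := by
      rw [hw, ← h1] at hw0; linarith
    have hdv : (n : ℤ) ∣ a := ⟨u, this⟩
    have := Int.isUnit_iff.mp (han.isUnit_of_dvd' hdv dvd_rfl)
    have : 0 < (N : ℤ) * N := by positivity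
    omega
  · obtain ⟨m', c, hm'0, hm'1, hb, hc⟩ := exists_bounded_bezout (N := N) (by omega) h1 huv
    have hm'2 : m' < N * N := by nlinarith
    refine key m' c hm'0 (by nlinarith) hc ?_
    have e : v * (c * n - a * m') = -(n + m' * w) := by
      rw [hw]; linear_combination (-(n : ℤ)) * hb
    have hb1 : m' * w ≤ m' * v := by gcongr
    have hb2 : m' * (-v) ≤ m' * w := by gcongr
    have hb3 : 4 * m' ≤ n := by linarith
    have hb4 : 0 ≤ (v - 2) * (n - 2 * m') := mul_nonneg (by linarith) (by linarith)
    rw [abs_le]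
    constructor
    · refine le_of_mul_le_mul_left ?_ hv0
      rw [e]; nlinarith
    · refine le_of_mul_le_mul_left ?_ hv0
      rw [e]; nlinarith

theorem finite_SSet {N : ℕ} (hN : 1 < N) : (SSet N).Finite := by
  set B := N * (4 * (N * N))
  refine Set.Finite.subset (((Set.finite_Icc (0 : ℤ) B).prod (Set.finite_Icc 0 B)).image
    (fun x : ℤ × ℕ => (x.1 : ℚ) / x.2)) ?_
  intro α hα
  have hd := den_le_of_mem_SSet hN hα
  refine ⟨(α.num, α.den), ⟨⟨Rat.num_nonneg.mpr hα.1.1, ?_⟩, ⟨Nat.zero_le _, hd⟩⟩,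
    Rat.num_div_den α⟩
  have h1 := hα.1.2.1
  rw [← Rat.num_div_den α, div_le_one (by exact_mod_cast α.den_pos)] at h1
  have h2 : α.num ≤ α.den := by exact_mod_cast h1
  exact h2.trans (by exact_mod_cast hd)

theorem poleComplexity_le_cN {N : ℕ} (hN : 1 < N) {α : ℚ} (h : α ∈ SSet N) :
    poleComplexity (SSet N) α ≤ cN N :=
  le_csSup ((finite_SSet hN).image _).bddAbove ⟨α, h, rfl⟩

/-- The odd integers between `3k` and `5k`, the denominators of the fractions `2 / m` that are
kept by the sieve. -/
def Admissible (k m : ℕ) : Prop := Odd m ∧ 3 * k ≤ m ∧ m ≤ 5 * k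

/-- A residue modulo `p` that removes `c / d` but none of the fractions `2 / m`. -/
theorem exists_residue {k p c d : ℕ} (hk : 0 < k) (hp : p.Prime) (hpk : 36 * k ^ 2 < p)
    (hcd : c ≤ d) (hd : 0 < d) (hdk : d < 6 * k) (hne : ∀ m, Admissible k m → c * m ≠ 2 * d) :
    ∃ r : ℕ, p ∣ r * d + c ∧ ∀ m, Admissible k m → ¬ p ∣ r * m + 2 := by
  have := Fact.mk hp
  have hdp : (d : ZMod p) ≠ 0 := by
    rw [Ne, ZMod.natCast_eq_zero_iff]
    intro h
    have := Nat.le_of_dvd hd h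
    nlinarith
  refine ⟨(-(c : ZMod p) / d).val, ?_⟩
  have h1 : p ∣ (-(c : ZMod p) / d).val * d + c := by
    rw [← ZMod.natCast_eq_zero_iff]
    push_cast
    rw [ZMod.natCast_zmod_val]
    field_simp
    ring
  refine ⟨h1, fun m hm h2 => ?_⟩
  set r := (-(c : ZMod p) / d).val
  have h3 : (p : ℤ) ∣ (c * m - 2 * d : ℤ) := by
    have e : (c * m - 2 * d : ℤ) = m * ((r * d + c : ℕ) : ℤ) - d * ((r * m + 2 : ℕ) : ℤ) := by
      push_cast; ring
    rw [e]
    exact dvd_sub ((Int.natCast_dvd_natCast.mpr h1).mul_left _)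
      ((Int.natCast_dvd_natCast.mpr h2).mul_left _)
  have h4 : (c * m - 2 * d : ℤ) = 0 := by
    refine Int.eq_zero_of_abs_lt_dvd h3 ?_
    have hb1 : c * m ≤ (6 * k) * (5 * k) := Nat.mul_le_mul (by omega) hm.2.2
    have hb2 : 2 * d < p := by nlinarith
    have hb3 : c * m < p := by nlinarith
    zify at hb2 hb3
    have : (0 : ℤ) ≤ c * m := by positivity
    rw [abs_lt]
    constructor <;> linarith
  exact hne m hm (by zify; linarith)

/-- An integer translate in which all fractions `c / d ∈ [0, 1]` with `d < 6k` are removed,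
except for the fractions `2 / m` with `m` admissible. -/
theorem exists_sieving_translate {N k : ℕ} (hN : 1 < N) (hk : 0 < k)
    (hω : 36 * k ^ 2 ≤ N.primeFactors.card) (hp : 36 * k ^ 2 < N.minFac) :
    ∃ X < N, (∀ m, Admissible k m → Nat.Coprime (X * m + 2) N) ∧
      ∀ c d, c ≤ d → 0 < d → d < 6 * k → (∀ m, Admissible k m → c * m ≠ 2 * d) →
        ¬ Nat.Coprime (X * d + c) N := by
  classical
  let bad : Finset (ℕ × ℕ) := (Finset.range (6 * k) ×ˢ Finset.range (6 * k)).filter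
    (fun x => x.1 ≤ x.2 ∧ 0 < x.2 ∧ ∀ m, Admissible k m → x.1 * m ≠ 2 * x.2)
  have hcard : bad.card ≤ N.primeFactors.card := by
    refine (Finset.card_filter_le _ _).trans (le_trans ?_ hω)
    rw [Finset.card_product, Finset.card_range]
    nlinarith
  obtain ⟨f⟩ : Nonempty (bad ↪ N.primeFactors) :=
    Function.Embedding.nonempty_of_card_le (by simpa using hcard)
  have hbig : ∀ p ∈ N.primeFactors, 36 * k ^ 2 < p := fun p h =>
    hp.trans_le (Nat.minFac_le_of_dvd (Nat.prime_of_mem_primeFactors h).two_le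
      (Nat.dvd_of_mem_primeFactors h))
  have hres : ∀ p ∈ N.primeFactors, ∃ r : ℕ,
      (∀ b : bad, (f b : ℕ) = p → p ∣ r * b.1.2 + b.1.1) ∧
      ∀ m, Admissible k m → ¬ p ∣ r * m + 2 := by
    intro p hpN
    have hpp := Nat.prime_of_mem_primeFactors hpN
    by_cases hb : ∃ b : bad, (f b : ℕ) = p
    · obtain ⟨b, hbp⟩ := hb
      obtain ⟨hb1, hb2, hb3, hb4⟩ := Finset.mem_filter.mp b.2
      obtain ⟨r, hr1, hr2⟩ := exists_residue hk hpp (hbig p hpN) hb2 hb3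
        (Finset.mem_range.mp (Finset.mem_product.mp hb1).2) hb4
      refine ⟨r, fun b' hb' => ?_, hr2⟩
      have : b' = b := f.injective (Subtype.ext (hb'.trans hbp.symm))
      rwa [this]
    · refine ⟨0, fun b h => (hb ⟨b, h⟩).elim, fun m _ h => ?_⟩
      have h2 := Nat.le_of_dvd (by omega) h
      have := hbig p hpN
      nlinarith
  choose! r hr1 hr2 using hres
  obtain ⟨Y, hY⟩ := Nat.chineseRemainderOfFinset r (fun p => p) N.primeFactors
    (fun p h => (Nat.prime_of_mem_primeFactors h).ne_zero)
    (fun p h p' h' hne => (Nat.coprime_primes (Nat.prime_of_mem_primeFactors h)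
      (Nat.prime_of_mem_primeFactors h')).mpr hne)
  have hX : ∀ p ∈ N.primeFactors, Y % N ≡ r p [MOD p] := fun p h =>
    ((Nat.mod_modEq Y N).of_dvd (Nat.dvd_of_mem_primeFactors h)).trans (hY p h)
  refine ⟨Y % N, Nat.mod_lt _ (by omega), fun m hm => ?_, fun c d hcd hd hdk hne hcop => ?_⟩
  · refine Nat.Coprime.symm (Nat.coprime_of_dvd fun p hpp hpN hpd => ?_)
    have hmem := Nat.mem_primeFactors.mpr ⟨hpp, hpN, by omega⟩
    exact hr2 p hmem m hm (((((hX p hmem).mul_right m).add_right 2).dvd_iff dvd_rfl).mp hpd)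
  · have hb : (c, d) ∈ bad := Finset.mem_filter.mpr ⟨Finset.mem_product.mpr
      ⟨Finset.mem_range.mpr (by simp only; omega), Finset.mem_range.mpr hdk⟩, hcd, hd, hne⟩
    have hmem := (f ⟨(c, d), hb⟩).2
    set p : ℕ := (f ⟨(c, d), hb⟩ : ℕ)
    have h1 := hr1 p hmem ⟨(c, d), hb⟩ rfl
    have h2 := ((((hX p hmem).mul_right d).add_right c).dvd_iff dvd_rfl).mpr h1
    exact (Nat.prime_of_mem_primeFactors hmem).one_lt.ne'
      (Nat.eq_one_of_dvd_coprimes hcop h2 (Nat.dvd_of_mem_primeFactors hmem))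

/-- The rational `(X + 2 / m) / N`. -/
def keptRat (N X m : ℕ) : ℚ := ((X * m + 2 : ℤ) : ℚ) / (N * m)

theorem den_keptRat {N X m : ℕ} (hN : 0 < N) (hm : Odd m) (h : Nat.Coprime (X * m + 2) N) :
    (keptRat N X m).den = N * m := by
  refine den_intCast_div (Nat.mul_pos hN hm.pos) ?_ ?_
  · have := Nat.isCoprime_iff_coprime.mpr h
    push_cast at this
    exact this
  · have h2 : IsCoprime (2 : ℤ) m := by
      have := Nat.isCoprime_iff_coprime.mpr (Nat.coprime_two_left.mpr hm)
      exact_mod_cast this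
    have := IsCoprime.add_mul_right_left h2 X
    rwa [add_comm] at this

theorem keptRat_eq {N X m : ℕ} (hm : 0 < m) :
    (keptRat N X m : ℝ) = (X + 2 / m) / N := by
  have : (0 : ℝ) < m := by exact_mod_cast hm
  rw [keptRat]
  push_cast
  field_simp

theorem keptRat_mem_cand {N X m : ℕ} (hX : X < N) (hm : Odd m) (hm2 : 2 ≤ m)
    (h : Nat.Coprime (X * m + 2) N) : keptRat N X m ∈ cand N := by
  have hN : 0 < N := by omega
  refine ⟨by rw [keptRat]; positivity, ?_, ⟨m, den_keptRat hN hm h⟩⟩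
  have : (0 : ℚ) < N * m := by exact_mod_cast Nat.mul_pos hN hm.pos
  rw [keptRat, div_le_one this]
  have : X * m + 2 ≤ N * m := by nlinarith
  exact_mod_cast this

theorem keptRat_mem_SSet {N X k m : ℕ} (hX : X < N) (hk : 0 < k)
    (hcop : ∀ m, Admissible k m → Nat.Coprime (X * m + 2) N)
    (hbad : ∀ c d, c ≤ d → 0 < d → d < 6 * k → (∀ m, Admissible k m → c * m ≠ 2 * d) →
      ¬ Nat.Coprime (X * d + c) N) (hN : 1 < N) (hm : Admissible k m) :
    keptRat N X m ∈ SSet N := by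
  have hm3 : 3 ≤ m := by have := hm.2.1; omega
  refine ⟨keptRat_mem_cand hX hm.1 (by omega) (hcop m hm), fun hsub => ?_⟩
  have hNR : (0 : ℝ) < N := by exact_mod_cast (by omega : 0 < N)
  have hmR : (0 : ℝ) < m := by exact_mod_cast (by omega : 0 < m)
  have hm3R : (3 : ℝ) ≤ m := by exact_mod_cast hm3
  have h3 : √3 ^ 2 = (3 : ℝ) := Real.sq_sqrt (by norm_num)
  -- the point where the disk touches the common tangent line of all kept disks
  let T : ℂ := ⟨(X + 3 / (2 * m)) / N, √3 / (2 * m) / N⟩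
  have hT : T ∈ disk (keptRat N X m) := by
    rw [mem_disk_iff, den_keptRat (by omega) hm.1 (hcop m hm), keptRat_eq (by omega)]
    apply le_of_eq
    simp only [T]
    push_cast
    field_simp
    rw [h3]
    ring
  obtain ⟨γ, hγ, hTγ⟩ := Set.mem_iUnion₂.mp (hsub hT)
  obtain ⟨hγc, hγne⟩ := hγ
  obtain ⟨a, d, hd, hden, hγeq, ha0, ha1, haN, had⟩ := exists_eq_of_mem_cand hγc
  have hdR : (0 : ℝ) < d := by exact_mod_cast hd
  have hγR : (γ : ℝ) = a / (N * d) := by rw [hγeq]; push_cast; rfl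
  rw [mem_disk_iff, hden, hγR] at hTγ
  have hmain : (X * d + 3 / (2 * m) * d - a) ^ 2 + 3 * (d / (2 * m)) ^ 2 ≤ (1 : ℝ) := by
    have e : (X * d + 3 / (2 * m) * d - a) ^ 2 + 3 * (d / (2 * m)) ^ 2
        = (N * d) ^ 2 * ((T.re - a / (N * d)) ^ 2 + T.im ^ 2) := by
      simp only [T]
      field_simp
      rw [h3]
    rw [e]
    calc ((N : ℝ) * d) ^ 2 * ((T.re - a / (N * d)) ^ 2 + T.im ^ 2)
        ≤ (N * d) ^ 2 * (1 / ((N * d : ℕ) : ℝ)) ^ 2 := by gcongr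
      _ = 1 := by push_cast; field_simp
  have hpos : (0 : ℝ) < d / (2 * m) := by positivity
  have hdk : d < 6 * k := by
    by_contra! hge
    have hgeR : (6 : ℝ) * k ≤ d := by exact_mod_cast hge
    have hmk : (m : ℝ) ≤ 5 * k := by exact_mod_cast hm.2.2
    have : (3 / 5 : ℝ) ≤ d / (2 * m) := by
      rw [le_div_iff₀ (by positivity)]; linarith
    nlinarith [sq_nonneg (X * d + 3 / (2 * m) * d - a : ℝ)]
  have habs : |(X * d + 3 / (2 * m) * d - a : ℝ)| < 1 := by
    rw [← sq_lt_one_iff_abs_lt_one]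
    nlinarith [sq_nonneg (d / (2 * m) : ℝ)]
  obtain ⟨hl, hu⟩ := abs_lt.mp habs
  have hfrac : (3 / (2 * m) : ℝ) < 1 := by
    rw [div_lt_one (by positivity)]; linarith
  have hfd : (3 / (2 * m) * d : ℝ) < d := by nlinarith
  have hfd0 : (0 : ℝ) < 3 / (2 * m) * d := by positivity
  have hc0 : (X * d : ℤ) ≤ a := by
    have : (X * d : ℝ) < a + 1 := by linarith
    have : (X * d : ℤ) < a + 1 := by exact_mod_cast this
    omega
  have hc1 : a ≤ (X * d + d : ℤ) := by
    have : (a : ℝ) < X * d + d + 1 := by linarith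
    have : (a : ℤ) < X * d + d + 1 := by exact_mod_cast this
    omega
  obtain ⟨c, hc⟩ := Int.le.dest hc0
  have hcd : c ≤ d := by
    rw [← hc] at hc1
    zify; linarith
  have hcopc : Nat.Coprime (X * d + c) N := by
    rw [← Nat.isCoprime_iff_coprime]
    push_cast
    rwa [hc]
  obtain ⟨m', hm', hcm⟩ : ∃ m', Admissible k m' ∧ c * m' = 2 * d := by
    by_contra! hcon
    exact hbad c d hcd hd hdk hcon hcopc
  have hm'0 : 0 < m' := hm'.1.pos
  have hm'R : (0 : ℝ) < m' := by exact_mod_cast hm'0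
  have hcR : (c : ℝ) = 2 * d / m' := by
    rw [eq_div_iff hm'R.ne']
    exact_mod_cast hcm
  have haR : (a : ℝ) = X * d + 2 * d / m' := by
    rw [← hcR, ← hc]; push_cast; ring
  by_cases hmm : m' = m
  · apply hγne
    have : (γ : ℝ) = keptRat N X m := by
      rw [hγR, keptRat_eq (by omega), haR, hmm]
      field_simp
    exact_mod_cast this
  have hdm : (m' : ℝ) = d := by
    have hd2 : m' ∣ 2 * d := ⟨c, by rw [← hcm, mul_comm]⟩
    have h1 : m' ∣ d := (Nat.coprime_two_right.mpr hm'.1).dvd_of_dvd_mul_left hd2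
    obtain ⟨e, he⟩ := h1
    have hce : c = 2 * e := by
      rw [he] at hcm
      exact Nat.eq_of_mul_eq_mul_right hm'0 (by linarith)
    have hec : (e : ℤ) ∣ a := by
      rw [← hc, he, hce]; push_cast
      exact ⟨X * m' + 2, by ring⟩
    have hed : (e : ℤ) ∣ (d : ℤ) := by rw [he]; push_cast; exact ⟨m', by ring⟩
    have := Int.isUnit_iff.mp (had.isUnit_of_dvd' hec hed)
    have he1 : e = 1 := by omega
    rw [he, he1, mul_one]
  have hne : (m' : ℝ) - m ≠ 0 := by
    rw [sub_ne_zero]; exact_mod_cast hmm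
  rw [haR, ← hdm] at hmain
  have e : (X * (m' : ℝ) + 3 / (2 * m) * m' - (X * m' + 2 * m' / m')) ^ 2
      + 3 * ((m' : ℝ) / (2 * m)) ^ 2 = 1 + 3 * ((m' - m) / m) ^ 2 := by
    field_simp
    ring
  rw [e] at hmain
  have : 0 < ((m' - m) / m : ℝ) ^ 2 := by positivity
  linarith

theorem northPole_keptRat_mem_disk {N X m n : ℕ} (hN : 0 < N) (hm : Odd m) (hn : Odd n)
    (hcm : Nat.Coprime (X * m + 2) N) (hcn : Nat.Coprime (X * n + 2) N) (hmn : m ≤ n)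
    (h : 4 * (n - m) ≤ n + m) : northPole (keptRat N X n) ∈ disk (keptRat N X m) := by
  have hNR : (0 : ℝ) < N := by exact_mod_cast hN
  have hmR : (0 : ℝ) < m := by exact_mod_cast hm.pos
  have hnR : (0 : ℝ) < n := by exact_mod_cast hn.pos
  have hre : (northPole (keptRat N X n)).re = (X + 2 / n) / N := by
    rw [northPole, Complex.add_re, Complex.div_natCast_re, Complex.I_re, zero_div, add_zero,
      ← Complex.ofReal_ratCast, Complex.ofReal_re, keptRat_eq hn.pos]
  have him : (northPole (keptRat N X n)).im = 1 / (N * n) := by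
    rw [northPole, Complex.add_im, Complex.div_natCast_im, Complex.I_im,
      ← Complex.ofReal_ratCast, Complex.ofReal_im, zero_add, den_keptRat hN hn hcn]
    push_cast; rfl
  rw [mem_disk_iff, hre, him, keptRat_eq hm.pos, den_keptRat hN hm hcm]
  have hR : (4 : ℝ) * (n - m) ≤ n + m := by
    rw [← Nat.cast_sub hmn]; exact_mod_cast h
  have hmnR : (m : ℝ) ≤ n := by exact_mod_cast hmn
  have e : (1 / ((N * m : ℕ) : ℝ)) ^ 2 - (((X + 2 / n) / N - (X + 2 / m) / N) ^ 2
      + (1 / (N * n : ℝ)) ^ 2) = (n - m) * (n + m - 4 * (n - m)) / (N * n * m) ^ 2 := by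
    push_cast; field_simp; ring
  have : (0 : ℝ) ≤ (n - m) * (n + m - 4 * (n - m)) / (N * n * m) ^ 2 := by
    apply div_nonneg (mul_nonneg (by linarith) (by linarith)) (by positivity)
  linarith

theorem le_cN_of_odd {N k : ℕ} (hN : 1 < N) (hk : Odd k)
    (hω : 36 * k ^ 2 ≤ N.primeFactors.card) (hp : 36 * k ^ 2 < N.minFac) : k ≤ cN N := by
  have hk0 := hk.pos
  obtain ⟨X, hX, hcop, hbad⟩ := exists_sieving_translate hN hk0 hω hp
  have hadm : ∀ j ≤ k, Admissible k (3 * k + 2 * j) := fun j hj =>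
    ⟨(Odd.mul (by decide) hk).add_even (even_two_mul j), by omega, by omega⟩
  have hmem : ∀ j ≤ k, keptRat N X (3 * k + 2 * j) ∈ SSet N := fun j hj =>
    keptRat_mem_SSet hX hk0 hcop hbad hN (hadm j hj)
  have hden : ∀ j ≤ k, (keptRat N X (3 * k + 2 * j)).den = N * (3 * k + 2 * j) := fun j hj =>
    den_keptRat (by omega) (hadm j hj).1 (hcop _ (hadm j hj))
  have hinj : ∀ i ≤ k, ∀ j ≤ k, keptRat N X (3 * k + 2 * i) = keptRat N X (3 * k + 2 * j) →
      i = j := by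
    intro i hi j hj h
    have h1 := congrArg Rat.den h
    rw [hden i hi, hden j hj] at h1
    have := Nat.eq_of_mul_eq_mul_left (by omega) h1
    omega
  refine le_trans ?_ (poleComplexity_le_cN hN (hmem k le_rfl))
  rw [poleComplexity]
  have hsub : (fun j => keptRat N X (3 * k + 2 * j)) '' (Finset.range k : Set ℕ) ⊆
      {β ∈ SSet N | β ≠ keptRat N X (3 * k + 2 * k) ∧
        northPole (keptRat N X (3 * k + 2 * k)) ∈ disk β} := by
    rintro _ ⟨j, hj, rfl⟩
    have hj' : j < k := by simpa using hj
    refine ⟨hmem j hj'.le, fun h => hj'.ne (hinj j hj'.le k le_rfl h), ?_⟩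
    exact northPole_keptRat_mem_disk (by omega) (hadm j hj'.le).1 (hadm k le_rfl).1
      (hcop _ (hadm j hj'.le)) (hcop _ (hadm k le_rfl)) (by omega) (by omega)
  refine le_trans (le_of_eq ?_) (Set.ncard_le_ncard hsub ((finite_SSet hN).subset
    (Set.sep_subset _ _)))
  rw [Set.InjOn.ncard_image, Set.ncard_coe_finset, Finset.card_range]
  intro i hi j hj h
  have hi' : i < k := by simpa using hi
  have hj' : j < k := by simpa using hj
  exact hinj i hi'.le j hj'.le h

/-- There are squarefree integers with arbitrarily many, arbitrarily large prime factors. -/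
theorem exists_card_primeFactors_minFac (B : ℕ) :
    ∃ N, 1 < N ∧ B ≤ N.primeFactors.card ∧ B < N.minFac := by
  obtain ⟨s, hs, hcard⟩ :=
    (Nat.infinite_setOfPred_prime.sdiff (Set.finite_Iic B)).exists_subset_card_eq (B + 1)
  have hprime : ∀ p ∈ s, p.Prime := fun p h => (hs h).1
  have hlarge : ∀ p ∈ s, B < p := fun p h => not_le.mp (hs h).2
  have hpf : (∏ p ∈ s, p).primeFactors = s := Nat.primeFactors_prod hprime
  have hN1 : (∏ p ∈ s, p) ≠ 1 := by
    intro h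
    rw [h, Nat.primeFactors_one] at hpf
    rw [← hpf] at hcard
    simp at hcard
  have hN0 : (∏ p ∈ s, p) ≠ 0 := Finset.prod_ne_zero_iff.mpr fun p h => (hprime p h).ne_zero
  refine ⟨∏ p ∈ s, p, by omega, by rw [hpf, hcard]; omega, hlarge _ ?_⟩
  have := Nat.mem_primeFactors.mpr ⟨Nat.minFac_prime hN1, Nat.minFac_dvd _, hN0⟩
  rwa [hpf] at this

/-- If the number of distinct prime factors of `N` and the smallest prime factor
of `N` are large enough in terms of a prime `q`, then `c(N) ≥ q - 2`.
In particular the complexity function is unbounded. -/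
theorem complexity_ge_of_many_large_prime_factors (N q : ℕ) (hN : 1 < N) (hq : q.Prime)
    (hω : (q : ℚ) ^ 6 / 2 + 3 * (q : ℚ) ^ 4 - 3 * (q : ℚ) ^ 3 / 2 + 9 * (q : ℚ) ^ 2 / 2
        - 11 * (q : ℚ) / 2 + 3 ≤ (N.primeFactors.card : ℚ))
    (hp : (q : ℚ) ^ 6 / 2 + 3 * (q : ℚ) ^ 4 - 2 * (q : ℚ) ^ 3 + 9 * (q : ℚ) ^ 2 / 2
        - 7 * (q : ℚ) + 3 ≤ (N.minFac : ℚ)) :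
    q - 2 ≤ cN N ∧ ∀ M : ℕ, ∃ N', 1 < N' ∧ M ≤ cN N' := by
  refine ⟨?_, fun M => ?_⟩
  · rcases hq.eq_two_or_odd' with rfl | hodd
    · simp
    obtain ⟨k, rfl⟩ : ∃ k, q = k + 2 := ⟨q - 2, by have := hq.two_le; omega⟩
    have hk : Odd k := by
      rcases Nat.even_or_odd k with h | h
      · exact absurd hodd (Nat.not_odd_iff_even.mpr (h.add even_two))
      · exact h
    rw [Nat.add_sub_cancel]
    have hk0 : (0 : ℚ) ≤ k := Nat.cast_nonneg k
    refine le_cN_of_odd hN hk ?_ ?_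
    · have : (36 * k ^ 2 : ℚ) ≤ N.primeFactors.card := by
        refine le_trans ?_ hω
        rw [← sub_nonneg]
        push_cast
        ring_nf
        positivity
      exact_mod_cast this
    · have : (36 * k ^ 2 : ℚ) < N.minFac := by
        refine lt_of_lt_of_le ?_ hp
        rw [← sub_pos]
        push_cast
        ring_nf
        positivity
      exact_mod_cast this
  · obtain ⟨N', h1, h2, h3⟩ := exists_card_primeFactors_minFac (36 * (2 * M + 1) ^ 2)
    exact ⟨N', h1, le_trans (by omega) (le_cN_of_odd h1 (odd_two_mul_add_one M) h2 h3)⟩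

end

end Paper
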